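/- Let 0<α<mn, 0<δ<mn−α, α̃=α+δ, and let p⃗ be a vector of exponents with p>n/α̃. Let δ̃ ≤ δ and let (w,v⃗) be a pair of weights in the class H_m(p⃗, α̃, δ̃) (for some fixed splitting α̃ = Σ α̃_i with 0<α̃_i<n), such that v_i^{−p_i'} ∈ RH_m for every i with 1<p_i≤∞. Then there is a constant C>0 such that for every ball B and every f⃗=(f_1,…,f_m) with f_i v_i ∈ L^{p_i}(ℝ^n) for each i, one has ∫_B |I_{α̃,m} g⃗(x)| dx ≤ C (|B|^{1+δ̃/n} / ‖w χ_B‖_∞) ∏_{i=1}^m ‖f_i v_i‖_{L^{p_i}}, where g⃗ = (f_1 χ_{2B}, …, f_m χ_{2B}) and 2B is the ball concentric with B of twice the radius. -/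

import Mathlib

/-!
Write `1 / p_i'` for the conjugate reciprocals, `Q = ∑ 1 / p_i'` and `a = (mn - α̃) / Q`. Here
`a > 0` because `α̃ < mn`, and the condition `p > n / α̃` gives `Q > 0` and says exactly that
`a < n`, so `|z|^{-a}` is locally integrable. Since
`∑ a / p_i' = mn - α̃`, the multilinear kernel is at most `∏ (|x - y_i|^{-a})^{1 / p_i'}`
(`kernel_le_prod`), and the integral over `(2B)^m` splits into a product of integrals over `2B`.
Hölder's inequality bounds the `i`-th one by `‖f_i v_i‖_{p_i} H_i(x)^{1 / p_i'}`, where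
`H_i(x) = ∫_{2B} v_i^{-p_i'} |x - y|^{-a} dy` (`one_factor_holder`). If `p_i = 1` the kernel
disappears and the factor `‖v_i⁻¹ χ_{2B}‖_∞` takes the place of `H_i^{1 / p_i'}`.

To integrate `∏ H_i^{1 / p_i'}` over `B`, apply Hölder's inequality with the exponents `m p_i'`;
this is possible because `Q ≤ m`. Each `‖H_i‖_{L^m(B)}` is controlled by `‖v_i^{-p_i'}‖_{L^m(2B)}`
(a Young inequality, `lintegral_kernel_rpow_le`), and then by the mean of `v_i^{-p_i'}` over `2B`
by the reverse Hölder inequality (`one_factor_young`). What is left is a power of `|B|` times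
`∏ ‖v_i⁻¹ χ_{2B}‖_{p_i'}`. On `2B` the weight `|B|^{1/n} + |x_B - y|` is comparable to `|B|^{1/n}`,
so the `H_m` condition over `B` bounds this product (`dualNorm_le_HmFactor`), and the powers
of `|B|` add up to `1 + δ̃ / n`.
-/

open MeasureTheory Metric Set
open scoped ENNReal NNReal BigOperators
open scoped Classical

noncomputable section

/-- Euclidean space `ℝⁿ`. -/
abbrev Rn (n : ℕ) : Type := EuclideanSpace ℝ (Fin n)

/-- The `q`-"norm" of a nonnegative function with respect to the measure `μ`,
for `q ∈ [1,∞]`; `q = ∞` gives the essential supremum. -/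
noncomputable def LpNormE {α : Type*} [MeasurableSpace α] (μ : Measure α)
    (g : α → ℝ≥0∞) (q : ℝ≥0∞) : ℝ≥0∞ :=
  if q = ∞ then essSup g μ else (∫⁻ x, g x ^ q.toReal ∂μ) ^ (1 / q.toReal)

/-- Conjugate exponent in `[1,∞]`. -/
noncomputable def conjE (q : ℝ≥0∞) : ℝ≥0∞ :=
  if q = 1 then ∞ else if q = ∞ then 1 else ENNReal.ofReal (q.toReal / (q.toReal - 1))

/-- Real-valued conjugate exponent of `q ∈ (1,∞]`. -/
noncomputable def conjR (q : ℝ≥0∞) : ℝ :=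
  if q = ∞ then 1 else q.toReal / (q.toReal - 1)

/-- A weight: measurable, a.e. positive and finite, and locally integrable. -/
def IsWeight (n : ℕ) (u : Rn n → ℝ≥0∞) : Prop :=
  Measurable u ∧ (∀ᵐ x ∂(volume : Measure (Rn n)), 0 < u x ∧ u x < ∞) ∧
    ∀ (c : Rn n) (R : ℝ), 0 < R → ∫⁻ x in ball c R, u x < ∞

/-- The `i`-th factor in the `H_m(p,β,δ̃)` condition over the ball `B(c,R)`
(`δ` is the fixed ambient parameter, `β i` the splitting of `β`). For `p i = 1`
the conjugate exponent is `∞` and the factor is an essential supremum. -/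
noncomputable def HmFactor (n m : ℕ) (δ : ℝ) (β : Fin m → ℝ) (p : Fin m → ℝ≥0∞)
    (v : Fin m → Rn n → ℝ≥0∞) (c : Rn n) (R : ℝ) (i : Fin m) : ℝ≥0∞ :=
  LpNormE volume
    (fun y => (v i y)⁻¹ *
      (volume (ball c R) ^ (n : ℝ)⁻¹ + edist c y) ^ (-((n : ℝ) - β i + δ / (m : ℝ))))
    (conjE (p i))

/-- The left-hand side of the `H_m(p,β,δ̃)` condition over the ball `B(c,R)`. -/
noncomputable def HmLHS (n m : ℕ) (δ δt : ℝ) (β : Fin m → ℝ) (p : Fin m → ℝ≥0∞)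
    (w : Rn n → ℝ≥0∞) (v : Fin m → Rn n → ℝ≥0∞) (c : Rn n) (R : ℝ) : ℝ≥0∞ :=
  essSup w (volume.restrict (ball c R)) / volume (ball c R) ^ ((δt - δ) / (n : ℝ)) *
    ∏ i, HmFactor n m δ β p v c R i

/-- The class `H_m(p,β,δ̃)`, with fixed ambient parameter `δ` and splitting `β i`. -/
def MemHm (n m : ℕ) (δ δt : ℝ) (β : Fin m → ℝ) (p : Fin m → ℝ≥0∞)
    (w : Rn n → ℝ≥0∞) (v : Fin m → Rn n → ℝ≥0∞) : Prop :=
  ∃ C : ℝ≥0∞, C ≠ ∞ ∧ ∀ (c : Rn n) (R : ℝ), 0 < R → HmLHS n m δ δt β p w v c R ≤ C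

/-- The reverse Hölder class `RH_s`. -/
def MemRH (n : ℕ) (s : ℝ) (u : Rn n → ℝ≥0∞) : Prop :=
  ∃ C : ℝ≥0∞, C ≠ ∞ ∧ ∀ (c : Rn n) (R : ℝ), 0 < R →
    ((volume (ball c R))⁻¹ * ∫⁻ x in ball c R, u x ^ s) ^ s⁻¹ ≤
      C * ((volume (ball c R))⁻¹ * ∫⁻ x in ball c R, u x)

/-- The reverse Hölder class `RH_∞`. -/
def MemRHinf (n : ℕ) (u : Rn n → ℝ≥0∞) : Prop :=
  ∃ C : ℝ≥0∞, C ≠ ∞ ∧ ∀ (c : Rn n) (R : ℝ), 0 < R →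
    essSup u (volume.restrict (ball c R)) ≤
      C * ((volume (ball c R))⁻¹ * ∫⁻ x in ball c R, u x)

/-- The Muckenhoupt class `A_1`. -/
def MemA1 (n : ℕ) (u : Rn n → ℝ≥0∞) : Prop :=
  ∃ C : ℝ≥0∞, C ≠ ∞ ∧ ∀ (c : Rn n) (R : ℝ), 0 < R →
    (volume (ball c R))⁻¹ * ∫⁻ x in ball c R, u x ≤
      C * essInf u (volume.restrict (ball c R))

/-- A doubling function: the integral over `2B` is controlled by the one over `B`. -/
def Doubling (n : ℕ) (u : Rn n → ℝ≥0∞) : Prop :=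
  ∃ C : ℝ≥0∞, C ≠ ∞ ∧ ∀ (c : Rn n) (R : ℝ), 0 < R →
    ∫⁻ x in ball c (2 * R), u x ≤ C * ∫⁻ x in ball c R, u x

/-- The `i`-th factor in the global condition over the ball `B(c,R)`. -/
noncomputable def GlobalFactor (n m : ℕ) (δ : ℝ) (β : Fin m → ℝ) (p : Fin m → ℝ≥0∞)
    (v : Fin m → Rn n → ℝ≥0∞) (c : Rn n) (R : ℝ) (i : Fin m) : ℝ≥0∞ :=
  LpNormE (volume.restrict (ball c R)ᶜ)
    (fun y => (v i y)⁻¹ * edist c y ^ (-((n : ℝ) - β i + δ / (m : ℝ)))) (conjE (p i))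

/-- The global condition associated with the class `H_m(p,β,δ̃)`. -/
def GlobalCond (n m : ℕ) (δ δt : ℝ) (β : Fin m → ℝ) (p : Fin m → ℝ≥0∞)
    (w : Rn n → ℝ≥0∞) (v : Fin m → Rn n → ℝ≥0∞) : Prop :=
  ∃ C : ℝ≥0∞, C ≠ ∞ ∧ ∀ (c : Rn n) (R : ℝ), 0 < R →
    essSup w (volume.restrict (ball c R)) / volume (ball c R) ^ ((δt - δ) / (n : ℝ)) *
      ∏ i, GlobalFactor n m δ β p v c R i ≤ C

/-- The local condition associated with the class `H_m(p,β,δ̃)`; here `β` is the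
total (scalar) parameter. -/
def LocalCond (n m : ℕ) (δt β : ℝ) (p : Fin m → ℝ≥0∞)
    (w : Rn n → ℝ≥0∞) (v : Fin m → Rn n → ℝ≥0∞) : Prop :=
  ∃ C : ℝ≥0∞, C ≠ ∞ ∧ ∀ (c : Rn n) (R : ℝ), 0 < R →
    essSup w (volume.restrict (ball c R)) /
        volume (ball c R) ^ (δt / (n : ℝ) + (∑ i, (p i)⁻¹).toReal - β / (n : ℝ)) *
      ∏ i, (if p i = 1 then essSup (fun x => (v i x)⁻¹) (volume.restrict (ball c R))
        else ((volume (ball c R))⁻¹ * ∫⁻ x in ball c R, (v i x)⁻¹ ^ conjR (p i)) ^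
          (conjR (p i))⁻¹) ≤ C

/-- The multilinear class `A_{p⃗,∞}`. -/
def MemApInf (n m : ℕ) (p : Fin m → ℝ≥0∞) (v : Fin m → Rn n → ℝ≥0∞) : Prop :=
  ∃ C : ℝ≥0∞, C ≠ ∞ ∧ ∀ (c : Rn n) (R : ℝ), 0 < R →
    essSup (fun x => ∏ i, v i x) (volume.restrict (ball c R)) *
      ∏ i, (if p i = 1 then essSup (fun x => (v i x)⁻¹) (volume.restrict (ball c R))
        else ((volume (ball c R))⁻¹ * ∫⁻ x in ball c R, (v i x)⁻¹ ^ conjR (p i)) ^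
          (conjR (p i))⁻¹) ≤ C

/-- The multilinear class `A_{p⃗,q}` for `0 < q < ∞`. -/
def MemApq (n m : ℕ) (p : Fin m → ℝ≥0∞) (q : ℝ) (w : Fin m → Rn n → ℝ≥0∞) : Prop :=
  ∃ C : ℝ≥0∞, C ≠ ∞ ∧ ∀ (c : Rn n) (R : ℝ), 0 < R →
    ((volume (ball c R))⁻¹ * ∫⁻ x in ball c R, ∏ i, w i x ^ q) ^ (1 / q) *
      ∏ i, (if p i = 1 then essSup (fun x => (w i x)⁻¹) (volume.restrict (ball c R))
        else ((volume (ball c R))⁻¹ * ∫⁻ x in ball c R, (w i x)⁻¹ ^ conjR (p i)) ^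
          (conjR (p i))⁻¹) ≤ C

/-- The multilinear Muckenhoupt class `A_{r⃗}`. -/
def MemAvec (n m : ℕ) (r : Fin m → ℝ≥0∞) (u : Fin m → Rn n → ℝ≥0∞) : Prop :=
  ∃ C : ℝ≥0∞, C ≠ ∞ ∧ ∀ (c : Rn n) (R : ℝ), 0 < R →
    ((volume (ball c R))⁻¹ *
        ∫⁻ x in ball c R, ∏ i, u i x ^ ((∑ j, (r j)⁻¹).toReal⁻¹ * ((r i)⁻¹).toReal)) ^
        (∑ j, (r j)⁻¹).toReal *
      ∏ i, (if r i = 1 then essSup (fun x => (u i x)⁻¹) (volume.restrict (ball c R))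
        else ((volume (ball c R))⁻¹ * ∫⁻ x in ball c R, u i x ^ (1 - conjR (r i))) ^
          (conjR (r i))⁻¹) ≤ C

/-- Product Lebesgue measure on `(ℝⁿ)^m`. -/
noncomputable def pim (n m : ℕ) : Measure (Fin m → Rn n) :=
  Measure.pi fun _ => (volume : Measure (Rn n))

/-- Size condition for a multilinear fractional kernel of order `α`. -/
def SizeCond (n m : ℕ) (α : ℝ) (K : Rn n → (Fin m → Rn n) → ℝ) : Prop :=
  ∃ C : ℝ, 0 < C ∧ ∀ (x : Rn n) (y : Fin m → Rn n), (∑ i, dist x (y i)) ≠ 0 →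
    |K x y| ≤ C * (∑ i, dist x (y i)) ^ (α - (m : ℝ) * (n : ℝ))

/-- Smoothness condition with exponent `γ` for a multilinear fractional kernel. -/
def SmoothCond (n m : ℕ) (α γ : ℝ) (K : Rn n → (Fin m → Rn n) → ℝ) : Prop :=
  ∃ C : ℝ, 0 < C ∧ ∀ (x x' : Rn n) (y : Fin m → Rn n),
    2 * dist x x' < ∑ i, dist x (y i) →
    |K x y - K x' y| ≤ C * dist x x' ^ γ * (∑ i, dist x (y i)) ^ (α - (m : ℝ) * (n : ℝ) - γ)

/-- The Lipschitz space `Λ(δ)`. -/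
def MemLip (n : ℕ) (δ : ℝ) (b : Rn n → ℝ) : Prop :=
  ∃ C : ℝ, 0 ≤ C ∧ ∀ x y : Rn n, |b x - b y| ≤ C * dist x y ^ δ

/-- The multilinear integral operator with kernel `K`. -/
noncomputable def TOp (n m : ℕ) (K : Rn n → (Fin m → Rn n) → ℝ)
    (f : Fin m → Rn n → ℝ) (x : Rn n) : ℝ :=
  ∫ y, K x y * ∏ i, f i (y i) ∂pim n m

/-- The sum-type multilinear commutator `T_{α,b}`. -/
noncomputable def TSumComm (n m : ℕ) (K : Rn n → (Fin m → Rn n) → ℝ)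
    (b : Fin m → Rn n → ℝ) (f : Fin m → Rn n → ℝ) (x : Rn n) : ℝ :=
  ∑ j, ∫ y, (b j x - b j (y j)) * K x y * ∏ i, f i (y i) ∂pim n m

/-- The product-type multilinear commutator `𝒯_{α,b}` (integral representation). -/
noncomputable def TProdComm (n m : ℕ) (K : Rn n → (Fin m → Rn n) → ℝ)
    (b : Fin m → Rn n → ℝ) (f : Fin m → Rn n → ℝ) (x : Rn n) : ℝ :=
  ∫ y, K x y * ∏ i, (b i x - b i (y i)) * f i (y i) ∂pim n m

/-- `‖f · v‖_q` for a real function `f` and a weight `v`. -/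
noncomputable def wLpNorm (n : ℕ) (f : Rn n → ℝ) (v : Rn n → ℝ≥0∞) (q : ℝ≥0∞) : ℝ≥0∞ :=
  LpNormE volume (fun x => ENNReal.ofReal |f x| * v x) q

/-- The (nonnegative) multilinear fractional integral `I_{a,m}`. -/
noncomputable def IfracE (n m : ℕ) (a : ℝ) (g : Fin m → Rn n → ℝ≥0∞) (x : Rn n) : ℝ≥0∞ :=
  ∫⁻ y, (∑ i, edist x (y i)) ^ (a - (m : ℝ) * (n : ℝ)) * ∏ i, g i (y i) ∂pim n m

/-- Commuting with `b` in the `j`-th entry. -/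
noncomputable def commAt (n m : ℕ) (T : (Fin m → Rn n → ℝ) → Rn n → ℝ)
    (g : Rn n → ℝ) (j : Fin m) (f : Fin m → Rn n → ℝ) (x : Rn n) : ℝ :=
  g x * T f x - T (Function.update f j fun z => g z * f j z) x

/-- The iterated commutator `[b_k, … [b_2, [b_1, T]_1]_2 … ]_k`. -/
noncomputable def iterComm (n m : ℕ) (T : (Fin m → Rn n → ℝ) → Rn n → ℝ)
    (b : Fin m → Rn n → ℝ) : ℕ → (Fin m → Rn n → ℝ) → Rn n → ℝ
  | 0 => T
  | k + 1 => fun f x =>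
      if h : k < m then commAt n m (iterComm n m T b k) (b ⟨k, h⟩) ⟨k, h⟩ f x
      else iterComm n m T b k f x

end

/-! ### Product integrals and kernels -/

/-- Tonelli for a product of functions of separate coordinates. -/
lemma lintegral_pi_prod {E : Type*} [MeasurableSpace E] (μ : Measure E) [SigmaFinite μ] (m : ℕ)
    (g : Fin m → E → ℝ≥0∞) (hg : ∀ i, Measurable (g i)) :
    ∫⁻ y, ∏ i, g i (y i) ∂Measure.pi (fun _ : Fin m => μ) = ∏ i, ∫⁻ z, g i z ∂μ := by
  induction m with
  | zero => simp
  | succ k ih =>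
    have hmp := (measurePreserving_piFinSuccAbove (fun _ : Fin (k + 1) => μ) 0).symm
    rw [← hmp.lintegral_comp_emb (MeasurableEquiv.measurableEmbedding _), Fin.prod_univ_succ,
      ← ih (fun i => g i.succ) fun i => hg _,
      ← lintegral_prod_mul (hg 0).aemeasurable
        (Finset.measurable_prod _ fun i _ =>
          (hg i.succ).comp (measurable_pi_apply i)).aemeasurable]
    refine lintegral_congr fun z => ?_
    simp [MeasurableEquiv.piFinSuccAbove_symm_apply, Fin.insertNthEquiv, Fin.prod_univ_succ]

lemma volume_ball_eq (n : ℕ) (c : Rn n) {R : ℝ} (hR : 0 < R) :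
    volume (ball c R) = ENNReal.ofReal R ^ (n : ℝ) * volume (ball (0 : Rn n) 1) := by
  rw [Measure.addHaar_ball_of_pos volume c hR, finrank_euclideanSpace_fin,
    ENNReal.ofReal_pow hR.le, ENNReal.rpow_natCast]

lemma volume_ball_ne_zero (n : ℕ) (c : Rn n) {R : ℝ} (hR : 0 < R) : volume (ball c R) ≠ 0 :=
  (measure_ball_pos volume c hR).ne'

lemma volume_ball_two (n : ℕ) (c : Rn n) {R : ℝ} (hR : 0 < R) :
    volume (ball c (2 * R)) = 2 ^ (n : ℝ) * volume (ball c R) := by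
  rw [volume_ball_eq n c (by positivity), volume_ball_eq n c hR, ENNReal.ofReal_mul (by norm_num),
    ENNReal.mul_rpow_of_nonneg _ _ (by positivity), mul_assoc]
  simp

/-- The radius of a ball is a fixed multiple of the `n`-th root of its volume. -/
lemma ofReal_radius (n : ℕ) (hn : 1 ≤ n) (c : Rn n) {R : ℝ} (hR : 0 < R) :
    ENNReal.ofReal R =
      volume (ball (0 : Rn n) 1) ^ (-(n : ℝ)⁻¹) * volume (ball c R) ^ (n : ℝ)⁻¹ := by
  have hn0 : (n : ℝ) ≠ 0 := by positivity
  rw [volume_ball_eq n c hR, ENNReal.mul_rpow_of_nonneg _ _ (by positivity), ← ENNReal.rpow_mul,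
    mul_inv_cancel₀ hn0, ENNReal.rpow_one, mul_left_comm,
    ← ENNReal.rpow_add _ _ (volume_ball_ne_zero n 0 one_pos) measure_ball_lt_top.ne]
  simp

/-- A singularity of order `a < n` is integrable on the unit ball. -/
lemma lintegral_unit_ball_rpow_ne_top (n : ℕ) (hn : 1 ≤ n) {a : ℝ} (ha : a < n) :
    ∫⁻ y in ball (0 : Rn n) 1, ‖y‖ₑ ^ (-a) ≠ ∞ := by
  have hint : IntegrableOn (fun y : Rn n => ‖y‖ ^ (-a)) (ball 0 1) volume := by
    refine integrableOn_ball_of_norm_le_rpow (C := 1) (α := a) (by simpa using hn)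
      (by simpa using ha) (ae_of_all _ fun x => ?_) ?_
    · rw [one_mul, Real.norm_of_nonneg (by positivity)]
    · exact (measurable_norm.pow_const _).aestronglyMeasurable
  refine ne_of_eq_of_ne (lintegral_congr_ae ?_) hint.2.ne
  have hnt : Nontrivial (Rn n) := by
    apply Module.nontrivial_of_finrank_pos (R := ℝ)
    simpa using Nat.lt_of_lt_of_le Nat.one_pos hn
  have h0 : ∀ᵐ y ∂(volume : Measure (Rn n)).restrict (ball 0 1), y ≠ 0 :=
    ae_restrict_of_ae (by simp [ae_iff])
  filter_upwards [h0] with y hy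
  rw [← ofReal_norm, ← ofReal_norm, Real.norm_of_nonneg (by positivity),
    ENNReal.ofReal_rpow_of_pos (norm_pos_iff.2 hy)]

/-- Scaling of the integral of a homogeneous singularity over a ball. -/
lemma lintegral_ball_edist_rpow (n : ℕ) (a : ℝ) (x : Rn n) {R : ℝ}
    (hR : 0 < R) :
    ∫⁻ y in ball x R, edist x y ^ (-a) =
      ENNReal.ofReal R ^ ((n : ℝ) - a) * ∫⁻ y in ball (0 : Rn n) 1, ‖y‖ₑ ^ (-a) := by
  have hR0 : ENNReal.ofReal R ≠ 0 := by simpa using hR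
  have hfin : ENNReal.ofReal R ≠ ∞ := ENNReal.ofReal_ne_top
  have hm : ∀ b : ℝ, Measurable fun y : Rn n => ‖y‖ₑ ^ b := fun b => by fun_prop
  rw [← lintegral_indicator measurableSet_ball, ← lintegral_indicator measurableSet_ball]
  have h1 : ∫⁻ y, (ball x R).indicator (fun y => edist x y ^ (-a)) y =
      ∫⁻ z, (ball (0 : Rn n) R).indicator (fun z => ‖z‖ₑ ^ (-a)) z := by
    rw [← lintegral_add_left_eq_self _ x]
    refine lintegral_congr fun z => ?_
    simp [indicator, edist_eq_enorm_sub]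
  have h2 := lintegral_map (μ := (volume : Measure (Rn n)))
    ((hm (-a)).indicator (measurableSet_ball (x := (0 : Rn n)) (ε := R)))
    (measurable_const_smul R)
  rw [Measure.map_addHaar_smul volume hR.ne', lintegral_smul_measure,
    finrank_euclideanSpace_fin] at h2
  have h3 : ∀ z : Rn n, (ball (0 : Rn n) R).indicator (fun z => ‖z‖ₑ ^ (-a)) (R • z) =
      ENNReal.ofReal R ^ (-a) * (ball (0 : Rn n) 1).indicator (fun z => ‖z‖ₑ ^ (-a)) z := by
    intro z
    have hz : R • z ∈ ball (0 : Rn n) R ↔ z ∈ ball (0 : Rn n) 1 := by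
      rw [mem_ball_zero_iff, mem_ball_zero_iff, norm_smul, Real.norm_of_nonneg hR.le]
      constructor <;> intro h <;> nlinarith
    by_cases h : z ∈ ball (0 : Rn n) 1
    · rw [indicator_of_mem (hz.2 h), indicator_of_mem h, enorm_smul, Real.enorm_of_nonneg hR.le,
        ENNReal.mul_rpow_of_ne_top hfin enorm_ne_top]
    · rw [indicator_of_notMem (hz.not.2 h), indicator_of_notMem h, mul_zero]
  simp_rw [h3] at h2
  rw [lintegral_const_mul _ ((hm _).indicator measurableSet_ball)] at h2
  have hc : ENNReal.ofReal R ^ (n : ℝ) * ENNReal.ofReal |(R ^ n)⁻¹| = 1 := by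
    rw [ENNReal.rpow_natCast, ← ENNReal.ofReal_pow hR.le, ← ENNReal.ofReal_mul (by positivity),
      abs_of_pos (by positivity), mul_inv_cancel₀ (by positivity), ENNReal.ofReal_one]
  rw [h1, sub_eq_add_neg, ENNReal.rpow_add _ _ hR0 hfin, mul_assoc, ← h2, smul_eq_mul,
    ← mul_assoc, hc, one_mul]

/-- The mass of `|x - ·|^{-a}` on `B(x, 3R)` in terms of the volume of a ball of radius `R`. -/
lemma exists_kernel_mass (n : ℕ) (hn : 1 ≤ n) {a : ℝ} (ha : a < n) :
    ∃ K : ℝ≥0∞, K ≠ ∞ ∧ ∀ (x c : Rn n) (R : ℝ), 0 < R →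
      ∫⁻ y in ball x (3 * R), edist x y ^ (-a) ≤ K * volume (ball c R) ^ (1 - a / n) := by
  have hn0 : (n : ℝ) ≠ 0 := by positivity
  have hω0 := volume_ball_ne_zero n 0 one_pos
  have hω : volume (ball (0 : Rn n) 1) ≠ ∞ := measure_ball_lt_top.ne
  have hna : 0 ≤ (n : ℝ) - a := by linarith
  refine ⟨(3 * volume (ball (0 : Rn n) 1) ^ (-(n : ℝ)⁻¹)) ^ ((n : ℝ) - a) *
    ∫⁻ y in ball (0 : Rn n) 1, ‖y‖ₑ ^ (-a), ?_, fun x c R hR => le_of_eq ?_⟩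
  · refine ENNReal.mul_ne_top (ENNReal.rpow_ne_top_of_nonneg hna
      (ENNReal.mul_ne_top (by simp) ?_)) (lintegral_unit_ball_rpow_ne_top n hn ha)
    exact ENNReal.rpow_ne_top_of_ne_zero hω0 hω
  · rw [lintegral_ball_edist_rpow n a x (by positivity), ENNReal.ofReal_mul (by norm_num),
      ofReal_radius n hn c hR, ← mul_assoc, ENNReal.mul_rpow_of_nonneg _ _ hna,
      ← ENNReal.rpow_mul, show (n : ℝ)⁻¹ * (n - a) = 1 - a / n by field_simp]
    simp only [ENNReal.ofReal_ofNat]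
    ring

/-- The multilinear kernel is dominated by a product of linear ones. -/
lemma kernel_le_prod (n m : ℕ) {a : ℝ} (ha : 0 ≤ a) (q : Fin m → ℝ) (hq : ∀ i, 0 ≤ q i)
    (x : Rn n) (y : Fin m → Rn n) :
    (∑ i, edist x (y i)) ^ (-(a * ∑ i, q i)) ≤ ∏ i, (edist x (y i) ^ (-a)) ^ q i := by
  have hne : ∀ i, edist x (y i) ^ (a * q i) ≠ ∞ := fun i =>
    ENNReal.rpow_ne_top_of_nonneg (mul_nonneg ha (hq i)) (edist_ne_top _ _)
  have hsum : ∀ (t : ℝ≥0∞) (s : Finset (Fin m)),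
      t ^ (a * ∑ i ∈ s, q i) = ∏ i ∈ s, t ^ (a * q i) := by
    intro t s
    induction s using Finset.induction with
    | empty => simp
    | insert i s hi ih =>
      rw [Finset.sum_insert hi, Finset.prod_insert hi, mul_add, ← ih,
        ENNReal.rpow_add_of_nonneg _ _ (mul_nonneg ha (hq i))
          (mul_nonneg ha (Finset.sum_nonneg fun j _ => hq j))]
  have hr : ∏ i, (edist x (y i) ^ (-a)) ^ q i = (∏ i, edist x (y i) ^ (a * q i))⁻¹ := by
    rw [ENNReal.prod_inv_distrib fun i _ j _ _ => Or.inr (hne j)]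
    refine Finset.prod_congr rfl fun i _ => ?_
    rw [← ENNReal.rpow_mul, neg_mul, ENNReal.rpow_neg]
  rw [ENNReal.rpow_neg, hsum, hr, ENNReal.inv_le_inv]
  refine Finset.prod_le_prod' fun i _ => ENNReal.rpow_le_rpow ?_ (mul_nonneg ha (hq i))
  exact Finset.single_le_sum (f := fun i => edist x (y i)) (fun _ _ => zero_le)
    (Finset.mem_univ i)

/-- A Young-type inequality: if the kernel `k` has mass at most `κ` in each variable, it maps
`L^s(A)` into `L^s(B)` with norm at most `κ`. -/
lemma lintegral_kernel_rpow_le {E : Type*} [MeasurableSpace E] (μ ν : Measure E) [SFinite μ]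
    [SFinite ν] {s : ℝ} (hs : 1 ≤ s) {V : E → ℝ≥0∞} (hV : Measurable V) {k : E → E → ℝ≥0∞}
    (hk : Measurable (Function.uncurry k)) (κ : ℝ≥0∞)
    (h1 : ∀ᵐ x ∂ν, ∫⁻ y, k x y ∂μ ≤ κ) (h2 : ∀ᵐ y ∂μ, ∫⁻ x, k x y ∂ν ≤ κ) :
    ∫⁻ x, (∫⁻ y, V y * k x y ∂μ) ^ s ∂ν ≤ κ ^ s * ∫⁻ y, V y ^ s ∂μ := by
  have hs0 : 0 < s := by linarith
  have hs1 : s⁻¹ ≤ 1 := inv_le_one_of_one_le₀ hs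
  have hsi : 0 ≤ s⁻¹ := by positivity
  have hkx : ∀ x, Measurable (k x) := fun x => hk.comp measurable_prodMk_left
  have hky : ∀ y, Measurable fun x => k x y := fun y => hk.comp measurable_prodMk_right
  have hVs : Measurable fun y => V y ^ s := hV.pow_const _
  have step : ∀ x, (∫⁻ y, V y * k x y ∂μ) ^ s ≤
      (∫⁻ y, k x y ∂μ) ^ (s - 1) * ∫⁻ y, V y ^ s * k x y ∂μ := by
    intro x
    have hH := ENNReal.lintegral_mul_prod_norm_pow_le (μ := μ) (Finset.univ : Finset Unit)
      (g := k x) (f := fun _ y => V y ^ s * k x y) (hkx x).aemeasurable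
      (fun _ _ => (hVs.mul (hkx x)).aemeasurable) (1 - s⁻¹) (p := fun _ => s⁻¹) (by simp)
      (by linarith) (fun _ _ => hsi)
    simp only [Finset.univ_unique, Finset.prod_const, Finset.card_singleton, pow_one] at hH
    have hpt : ∀ y, k x y ^ (1 - s⁻¹) * (V y ^ s * k x y) ^ s⁻¹ = V y * k x y := by
      intro y
      rw [ENNReal.mul_rpow_of_nonneg _ _ hsi, ← ENNReal.rpow_mul, mul_inv_cancel₀ hs0.ne',
        ENNReal.rpow_one, mul_left_comm, ← ENNReal.rpow_add_of_nonneg _ _ (by linarith) hsi,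
        sub_add_cancel, ENNReal.rpow_one]
    simp_rw [hpt] at hH
    calc (∫⁻ y, V y * k x y ∂μ) ^ s
        ≤ ((∫⁻ y, k x y ∂μ) ^ (1 - s⁻¹) * (∫⁻ y, V y ^ s * k x y ∂μ) ^ s⁻¹) ^ s :=
          ENNReal.rpow_le_rpow hH hs0.le
      _ = _ := by
          rw [ENNReal.mul_rpow_of_nonneg _ _ hs0.le, ← ENNReal.rpow_mul, ← ENNReal.rpow_mul,
            inv_mul_cancel₀ hs0.ne', ENNReal.rpow_one, sub_mul, inv_mul_cancel₀ hs0.ne', one_mul]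
  calc ∫⁻ x, (∫⁻ y, V y * k x y ∂μ) ^ s ∂ν
      ≤ ∫⁻ x, κ ^ (s - 1) * ∫⁻ y, V y ^ s * k x y ∂μ ∂ν := by
        refine lintegral_mono_ae ?_
        filter_upwards [h1] with x hx
        exact (step x).trans (mul_le_mul_left (ENNReal.rpow_le_rpow hx (by linarith)) _)
    _ = κ ^ (s - 1) * ∫⁻ y, V y ^ s * ∫⁻ x, k x y ∂ν ∂μ := by
        have hjm : Measurable (Function.uncurry fun x y => V y ^ s * k x y) :=
          (hVs.comp measurable_snd).mul hk
        have hin : Measurable fun x => ∫⁻ y, V y ^ s * k x y ∂μ := hjm.lintegral_prod_right'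
        rw [lintegral_const_mul _ hin,
          lintegral_lintegral_swap hjm.aemeasurable]
        congr 1
        exact lintegral_congr fun y => lintegral_const_mul _ (hky y)
    _ ≤ κ ^ (s - 1) * ∫⁻ y, V y ^ s * κ ∂μ := by
        refine mul_le_mul_right (lintegral_mono_ae ?_) _
        filter_upwards [h2] with y hy
        exact mul_le_mul_right hy _
    _ = κ ^ s * ∫⁻ y, V y ^ s ∂μ := by
        rw [lintegral_mul_const _ hVs, mul_comm _ κ, ← mul_assoc]
        congr 1
        nth_rewrite 2 [← ENNReal.rpow_one κ]
        rw [← ENNReal.rpow_add_of_nonneg _ _ (by linarith) zero_le_one, sub_add_cancel]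

/-! ### Hölder's inequality with conjugate exponents -/

/-- The reciprocal `1 / p'` of the conjugate exponent. -/
noncomputable def qR (p : ℝ≥0∞) : ℝ := 1 - (p⁻¹).toReal

/-- The norm `‖v⁻¹ χ_A‖_{p'}`. -/
noncomputable def dualNorm (n : ℕ) (p : ℝ≥0∞) (v : Rn n → ℝ≥0∞) (A : Set (Rn n)) : ℝ≥0∞ :=
  LpNormE (volume.restrict A) (fun y => (v y)⁻¹) (conjE p)

/-- The essential supremum of `v⁻¹` on `A` if `p = 1`, and `1` otherwise. With this factor the
endpoint `p = 1` can be treated together with `p > 1`. -/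
noncomputable def endFactor (n : ℕ) (p : ℝ≥0∞) (v : Rn n → ℝ≥0∞) (A : Set (Rn n)) : ℝ≥0∞ :=
  if p = 1 then essSup (fun y => (v y)⁻¹) (volume.restrict A) else 1

lemma qR_one : qR 1 = 0 := by simp [qR]

lemma qR_top : qR ∞ = 1 := by simp [qR]

lemma toReal_inv_le_one {p : ℝ≥0∞} (hp : 1 ≤ p) : (p⁻¹).toReal ≤ 1 :=
  ENNReal.toReal_le_of_le_ofReal zero_le_one (by simpa using hp)

lemma qR_nonneg {p : ℝ≥0∞} (hp : 1 ≤ p) : 0 ≤ qR p :=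
  sub_nonneg.2 (toReal_inv_le_one hp)

lemma qR_le_one (p : ℝ≥0∞) : qR p ≤ 1 := by
  have : 0 ≤ (p⁻¹).toReal := ENNReal.toReal_nonneg
  simp only [qR]; linarith

lemma one_lt_toReal {p : ℝ≥0∞} (hp : 1 < p) (ht : p ≠ ∞) : 1 < p.toReal := by
  rwa [← ENNReal.toReal_one, ENNReal.toReal_lt_toReal ENNReal.one_ne_top ht]

lemma qR_eq {p : ℝ≥0∞} (hp : 1 < p) : qR p = (conjR p)⁻¹ := by
  by_cases ht : p = ∞
  · simp [ht, qR, conjR]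
  · have h := one_lt_toReal hp ht
    rw [qR, conjR, if_neg ht, ENNReal.toReal_inv]
    field_simp

lemma conjR_pos {p : ℝ≥0∞} (hp : 1 < p) : 0 < conjR p := by
  by_cases ht : p = ∞
  · simp [ht, conjR]
  · have h := one_lt_toReal hp ht
    rw [conjR, if_neg ht]
    exact div_pos (by linarith) (by linarith)

lemma conjE_one : conjE 1 = ∞ := by simp [conjE]

lemma conjE_ne_top {p : ℝ≥0∞} (hp : 1 < p) : conjE p ≠ ∞ := by
  rw [conjE, if_neg hp.ne']
  split_ifs <;> simp

lemma conjE_toReal {p : ℝ≥0∞} (hp : 1 < p) : (conjE p).toReal = conjR p := by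
  rw [conjE, if_neg hp.ne']
  by_cases ht : p = ∞
  · simp [ht, conjR]
  · have h := conjR_pos hp
    rw [conjR, if_neg ht] at h
    rw [if_neg ht, ENNReal.toReal_ofReal h.le, conjR, if_neg ht]

/-- `‖v⁻¹ χ_A‖_{p'}` written with `endFactor`. -/
lemma dualNorm_eq (n : ℕ) {p : ℝ≥0∞} (hp : 1 ≤ p) (v : Rn n → ℝ≥0∞) (A : Set (Rn n)) :
    dualNorm n p v A = endFactor n p v A * (∫⁻ y in A, (v y)⁻¹ ^ conjR p) ^ qR p := by
  rcases hp.eq_or_lt with rfl | h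
  · simp [dualNorm, endFactor, conjE_one, LpNormE, qR_one]
  · rw [dualNorm, endFactor, if_neg h.ne', LpNormE, if_neg (conjE_ne_top h), conjE_toReal h,
      qR_eq h, one_div, one_mul]

/-- Hölder's inequality for one entry, with the kernel `k^{1/p'}`; if `p = 1` the kernel
disappears. -/
lemma one_factor_holder (n : ℕ) {p : ℝ≥0∞} (hp : 1 ≤ p) {v : Rn n → ℝ≥0∞} (hv : Measurable v)
    (hv0 : ∀ᵐ x ∂(volume : Measure (Rn n)), 0 < v x ∧ v x < ∞) {f : Rn n → ℝ}
    (hf : Measurable f) {A : Set (Rn n)} (hA : MeasurableSet A) {k : Rn n → ℝ≥0∞}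
    (hk : Measurable k) :
    ∫⁻ y, A.indicator (fun z => ENNReal.ofReal |f z|) y * k y ^ qR p ≤
      wLpNorm n f v p * endFactor n p v A *
        (∫⁻ y in A, (v y)⁻¹ ^ conjR p * k y) ^ qR p := by
  set F : Rn n → ℝ≥0∞ := fun z => ENNReal.ofReal |f z| with hF
  have hFm : Measurable F := by fun_prop
  have hFv : Measurable fun y => F y * v y := hFm.mul hv
  have hsplit : ∫⁻ y, A.indicator F y * k y ^ qR p =
      ∫⁻ y in A, (F y * v y) * ((v y)⁻¹ * k y ^ qR p) := by
    rw [← lintegral_indicator hA]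
    refine lintegral_congr_ae ?_
    filter_upwards [hv0] with y hy
    by_cases h : y ∈ A
    · simp only [indicator_of_mem h]
      rw [mul_assoc, ← mul_assoc (v y), ENNReal.mul_inv_cancel hy.1.ne' hy.2.ne, one_mul]
    · simp [indicator_of_notMem h]
  rw [hsplit]
  rcases hp.eq_or_lt with rfl | h1
  · simp only [qR_one, ENNReal.rpow_zero, mul_one, endFactor, if_true, wLpNorm, LpNormE,
      ENNReal.one_ne_top, if_false, ENNReal.toReal_one, ENNReal.rpow_one, div_one]
    rw [← lintegral_mul_const _ hFv]
    refine (lintegral_mono_ae ?_).trans (setLIntegral_le_lintegral A _)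
    filter_upwards [ENNReal.ae_le_essSup (μ := volume.restrict A) fun y => (v y)⁻¹] with y hy
    exact mul_le_mul_right hy _
  · rw [endFactor, if_neg h1.ne', mul_one]
    by_cases ht : p = ∞
    · subst ht
      simp only [qR_top, ENNReal.rpow_one, wLpNorm, LpNormE, if_true, conjR]
      have hvk : Measurable fun y => (v y)⁻¹ * k y := hv.inv.mul hk
      rw [← lintegral_const_mul _ hvk]
      refine lintegral_mono_ae (ae_restrict_of_ae ?_)
      filter_upwards [ENNReal.ae_le_essSup (μ := volume) fun y => F y * v y] with y hy
      exact mul_le_mul_left hy _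
    · have hpr := one_lt_toReal h1 ht
      have hcj : p.toReal.HolderConjugate (conjR p) := by
        rw [conjR, if_neg ht]
        exact Real.HolderConjugate.conjExponent hpr
      have hq := conjR_pos h1
      refine (ENNReal.lintegral_mul_le_Lp_mul_Lq (volume.restrict A) hcj
        (f := fun y => F y * v y) (g := fun y => (v y)⁻¹ * k y ^ qR p)
        (hFm.mul hv).aemeasurable (hv.inv.mul (hk.pow_const _)).aemeasurable).trans ?_
      refine mul_le_mul' ?_ (le_of_eq ?_)
      · rw [wLpNorm, LpNormE, if_neg ht]
        exact ENNReal.rpow_le_rpow (setLIntegral_le_lintegral A _) (by positivity)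
      · rw [qR_eq h1, one_div]
        congr 1
        refine lintegral_congr fun y => ?_
        rw [ENNReal.mul_rpow_of_nonneg _ _ hq.le, ← ENNReal.rpow_mul, inv_mul_cancel₀ hq.ne',
          ENNReal.rpow_one]

lemma LpNormE_const_mul {α : Type*} [MeasurableSpace α] (μ : Measure α) (g : α → ℝ≥0∞)
    (hg : Measurable g) {q : ℝ≥0∞} (hq : q ≠ 0) (a : ℝ≥0∞) :
    LpNormE μ (fun x => a * g x) q = a * LpNormE μ g q := by
  by_cases ht : q = ∞
  · simp only [LpNormE, ht, if_true]
    exact ENNReal.essSup_const_mul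
  · have hr : 0 < q.toReal := ENNReal.toReal_pos hq ht
    simp only [LpNormE, ht, if_false, ENNReal.mul_rpow_of_nonneg _ _ hr.le]
    rw [lintegral_const_mul _ (hg.pow_const _),
      ENNReal.mul_rpow_of_nonneg _ _ (by positivity), ← ENNReal.rpow_mul,
      mul_one_div_cancel hr.ne', ENNReal.rpow_one]

lemma LpNormE_mono {α : Type*} [MeasurableSpace α] {μ ν : Measure α} (hμ : μ ≤ ν)
    {g h : α → ℝ≥0∞} (hgh : ∀ᵐ x ∂μ, g x ≤ h x) (q : ℝ≥0∞) :
    LpNormE μ g q ≤ LpNormE ν h q := by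
  by_cases ht : q = ∞
  · simp only [LpNormE, ht, if_true]
    exact (essSup_mono_ae hgh).trans (essSup_mono_measure' hμ)
  · simp only [LpNormE, ht, if_false]
    refine ENNReal.rpow_le_rpow (le_trans (lintegral_mono_ae ?_) (lintegral_mono' hμ le_rfl))
      (by positivity)
    filter_upwards [hgh] with x hx
    exact ENNReal.rpow_le_rpow hx ENNReal.toReal_nonneg

lemma conjE_ne_zero {p : ℝ≥0∞} (hp : 1 ≤ p) : conjE p ≠ 0 := by
  rcases hp.eq_or_lt with rfl | h
  · simp [conjE_one]
  · intro h0
    have := conjE_toReal h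
    rw [h0, ENNReal.toReal_zero] at this
    exact (conjR_pos h).ne this

/-- On `2B` the weight in `HmFactor` is comparable to a power of the radius. -/
lemma dualNorm_le_HmFactor (n m : ℕ) (δ : ℝ) (β : Fin m → ℝ) (p : Fin m → ℝ≥0∞)
    (v : Fin m → Rn n → ℝ≥0∞) (i : Fin m) (hp : 1 ≤ p i) (hv : Measurable (v i))
    (he : 0 ≤ (n : ℝ) - β i + δ / m) (c : Rn n) {R : ℝ} (hR : 0 < R) :
    dualNorm n (p i) (v i) (ball c (2 * R)) ≤
      (volume (ball c R) ^ (n : ℝ)⁻¹ + ENNReal.ofReal (2 * R)) ^ ((n : ℝ) - β i + δ / m) *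
        HmFactor n m δ β p v c R i := by
  have hfin : volume (ball c R) ^ (n : ℝ)⁻¹ ≠ ∞ :=
    ENNReal.rpow_ne_top_of_nonneg (by positivity) measure_ball_lt_top.ne
  have hpos : volume (ball c R) ^ (n : ℝ)⁻¹ ≠ 0 :=
    (ENNReal.rpow_pos (measure_ball_pos volume c hR) measure_ball_lt_top.ne).ne'
  have hm : Measurable fun y => (v i y)⁻¹ *
      (volume (ball c R) ^ (n : ℝ)⁻¹ + edist c y) ^ (-((n : ℝ) - β i + δ / (m : ℝ))) :=
    hv.inv.mul (by fun_prop)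
  rw [HmFactor, ← LpNormE_const_mul _ _ hm (conjE_ne_zero hp), dualNorm]
  refine LpNormE_mono Measure.restrict_le_self ?_ _
  filter_upwards [ae_restrict_mem measurableSet_ball] with y hy
  have hd : edist c y ≤ ENNReal.ofReal (2 * R) := by
    rw [edist_dist, dist_comm]
    exact ENNReal.ofReal_le_ofReal (mem_ball.1 hy).le
  have hs0 : volume (ball c R) ^ (n : ℝ)⁻¹ + edist c y ≠ 0 := by simp [hpos]
  have hs : volume (ball c R) ^ (n : ℝ)⁻¹ + edist c y ≠ ∞ :=
    ENNReal.add_ne_top.2 ⟨hfin, edist_ne_top _ _⟩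
  calc (v i y)⁻¹ = (v i y)⁻¹ * ((volume (ball c R) ^ (n : ℝ)⁻¹ + edist c y) ^
        ((n : ℝ) - β i + δ / m) * (volume (ball c R) ^ (n : ℝ)⁻¹ + edist c y) ^
          (-((n : ℝ) - β i + δ / m))) := by
        rw [← ENNReal.rpow_add _ _ hs0 hs, add_neg_cancel, ENNReal.rpow_zero, mul_one]
    _ ≤ (v i y)⁻¹ * ((volume (ball c R) ^ (n : ℝ)⁻¹ + ENNReal.ofReal (2 * R)) ^
        ((n : ℝ) - β i + δ / m) * (volume (ball c R) ^ (n : ℝ)⁻¹ + edist c y) ^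
          (-((n : ℝ) - β i + δ / m))) := by gcongr
    _ = _ := by ring

/-! ### The local estimate -/

/-- For one entry, Young's inequality and the reverse Hölder inequality bound the `L^{m p'}(B)`
norm of the potential of `v^{-p'} χ_{2B}` by `‖v⁻¹ χ_{2B}‖_{p'}` and a power of `|B|`. -/
lemma one_factor_young (n m : ℕ) (hn : 1 ≤ n) (hm : 1 ≤ m) {a : ℝ} (ha : a < n)
    {p : ℝ≥0∞} (hp : 1 ≤ p) {v : Rn n → ℝ≥0∞} (hv : Measurable v)
    (hRH : 1 < p → MemRH n (m : ℝ) fun x => (v x)⁻¹ ^ conjR p) :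
    ∃ C : ℝ≥0∞, C ≠ ∞ ∧ ∀ (c : Rn n) (R : ℝ), 0 < R →
      endFactor n p v (ball c (2 * R)) *
        ((∫⁻ x in ball c R, (∫⁻ y in ball c (2 * R),
          (v y)⁻¹ ^ conjR p * edist x y ^ (-a)) ^ (m : ℝ)) ^ (m : ℝ)⁻¹) ^ qR p ≤
      C * volume (ball c R) ^ (((m : ℝ)⁻¹ - a / n) * qR p) *
        dualNorm n p v (ball c (2 * R)) := by
  rcases hp.eq_or_lt with rfl | h1
  · exact ⟨1, ENNReal.one_ne_top, fun c R hR => by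
      rw [dualNorm_eq n le_rfl]; simp [qR_one]⟩
  obtain ⟨D, hD, hDb⟩ := hRH h1
  obtain ⟨K, hK, hKb⟩ := exists_kernel_mass n hn ha
  have hq := qR_nonneg hp
  have hm0 : (0 : ℝ) < m := by positivity
  have hm1 : (1 : ℝ) ≤ m := by exact_mod_cast hm
  refine ⟨(K * D * (2 ^ (n : ℝ)) ^ ((m : ℝ)⁻¹ - 1)) ^ qR p, ?_, fun c R hR => ?_⟩
  · refine ENNReal.rpow_ne_top_of_nonneg hq (ENNReal.mul_ne_top (ENNReal.mul_ne_top hK hD) ?_)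
    exact ENNReal.rpow_ne_top_of_ne_zero (by simp) (by simp)
  set T := volume (ball c R) with hT
  have hT0 : T ≠ 0 := volume_ball_ne_zero n c hR
  have hTt : T ≠ ∞ := measure_ball_lt_top.ne
  set V : Rn n → ℝ≥0∞ := fun x => (v x)⁻¹ ^ conjR p with hV
  have hVm : Measurable V := hv.inv.pow_const _
  have hkm : Measurable (Function.uncurry fun x y : Rn n => edist x y ^ (-a)) := by
    exact (measurable_fst.edist measurable_snd).pow_const _
  have h2B : volume (ball c (2 * R)) = 2 ^ (n : ℝ) * T := volume_ball_two n c hR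
  set S := volume (ball c (2 * R)) with hS
  have hS0 : S ≠ 0 := volume_ball_ne_zero n c (by positivity)
  have hSt : S ≠ ∞ := measure_ball_lt_top.ne
  have hY := lintegral_kernel_rpow_le (volume.restrict (ball c (2 * R)))
    (volume.restrict (ball c R)) hm1 hVm hkm (K * T ^ (1 - a / n))
    (by
      filter_upwards [ae_restrict_mem measurableSet_ball] with x hx
      refine (lintegral_mono_set fun y hy => ?_).trans (hKb x c R hR)
      rw [mem_ball] at hx hy ⊢
      linarith [dist_triangle y c x, dist_comm c x])
    (by
      filter_upwards [ae_restrict_mem measurableSet_ball] with y hy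
      simp_rw [edist_comm _ y]
      refine (lintegral_mono_set fun x hx => ?_).trans (hKb y c R hR)
      rw [mem_ball] at hx hy ⊢
      linarith [dist_triangle x c y, dist_comm c y])
  have hR2 := hDb c (2 * R) (by positivity)
  rw [← hS] at hR2
  have hVm_le : (∫⁻ y in ball c (2 * R), V y ^ (m : ℝ)) ^ (m : ℝ)⁻¹ ≤
      S ^ ((m : ℝ)⁻¹ - 1) * D * ∫⁻ y in ball c (2 * R), V y := by
    calc (∫⁻ y in ball c (2 * R), V y ^ (m : ℝ)) ^ (m : ℝ)⁻¹
        = S ^ (m : ℝ)⁻¹ * (S⁻¹ * ∫⁻ y in ball c (2 * R), V y ^ (m : ℝ)) ^ (m : ℝ)⁻¹ := by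
          rw [← ENNReal.mul_rpow_of_nonneg _ _ (by positivity), ← mul_assoc,
            ENNReal.mul_inv_cancel hS0 hSt, one_mul]
      _ ≤ S ^ (m : ℝ)⁻¹ * (D * (S⁻¹ * ∫⁻ y in ball c (2 * R), V y)) := by gcongr
      _ = _ := by
          rw [sub_eq_add_neg, ENNReal.rpow_add _ _ hS0 hSt, ENNReal.rpow_neg_one]
          ring
  have hmain : (∫⁻ x in ball c R, (∫⁻ y in ball c (2 * R),
      V y * edist x y ^ (-a)) ^ (m : ℝ)) ^ (m : ℝ)⁻¹ ≤
      (K * D * (2 ^ (n : ℝ)) ^ ((m : ℝ)⁻¹ - 1)) * T ^ ((m : ℝ)⁻¹ - a / n) *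
        ∫⁻ y in ball c (2 * R), V y := by
    refine (ENNReal.rpow_le_rpow hY (by positivity)).trans ?_
    rw [ENNReal.mul_rpow_of_nonneg _ _ (by positivity), ← ENNReal.rpow_mul,
      mul_inv_cancel₀ hm0.ne', ENNReal.rpow_one]
    refine (mul_le_mul_right hVm_le _).trans (le_of_eq ?_)
    rw [h2B, ENNReal.mul_rpow_of_ne_top (by simp) hTt,
      show (m : ℝ)⁻¹ - a / n = (1 - a / n) + ((m : ℝ)⁻¹ - 1) by ring,
      ENNReal.rpow_add (1 - a / n) _ hT0 hTt]
    ring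
  rw [dualNorm_eq n hp]
  calc _ ≤ endFactor n p v (ball c (2 * R)) *
        ((K * D * (2 ^ (n : ℝ)) ^ ((m : ℝ)⁻¹ - 1)) * T ^ ((m : ℝ)⁻¹ - a / n) *
          ∫⁻ y in ball c (2 * R), V y) ^ qR p := by
        exact mul_le_mul_right (ENNReal.rpow_le_rpow hmain hq) _
    _ = _ := by
        rw [ENNReal.mul_rpow_of_nonneg _ _ hq, ENNReal.mul_rpow_of_nonneg _ _ hq,
          ← ENNReal.rpow_mul T]
        ring

lemma ENNReal_prod_rpow_sum {ι : Type*} (T : ℝ≥0∞) (h0 : T ≠ 0) (ht : T ≠ ∞) (s : Finset ι)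
    (e : ι → ℝ) : ∏ i ∈ s, T ^ e i = T ^ ∑ i ∈ s, e i := by
  induction s using Finset.induction with
  | empty => simp
  | insert i s hi ih =>
    rw [Finset.prod_insert hi, Finset.sum_insert hi, ih, ENNReal.rpow_add _ _ h0 ht]

/-- Pointwise bound for the multilinear fractional integral by a product of linear potentials,
where `a ∑ 1 / p_i'` is the order of the singularity. -/
lemma IfracE_le (n m : ℕ) {a γ : ℝ} (ha : 0 ≤ a) {p : Fin m → ℝ≥0∞} (hp : ∀ i, 1 ≤ p i)
    (hγ : γ - (m : ℝ) * n = -(a * ∑ i, qR (p i))) {v : Fin m → Rn n → ℝ≥0∞}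
    (hv : ∀ i, IsWeight n (v i)) {f : Fin m → Rn n → ℝ} (hf : ∀ i, Measurable (f i))
    {A : Set (Rn n)} (hA : MeasurableSet A) (x : Rn n) :
    IfracE n m γ (fun i => A.indicator fun z => ENNReal.ofReal |f i z|) x ≤
      (∏ i, wLpNorm n (f i) (v i) (p i)) * (∏ i, endFactor n (p i) (v i) A) *
        ∏ i, (∫⁻ y in A, (v i y)⁻¹ ^ conjR (p i) * edist x y ^ (-a)) ^ qR (p i) := by
  have hk : Measurable fun y : Rn n => edist x y ^ (-a) := by fun_prop
  have hq : ∀ i, 0 ≤ qR (p i) := fun i => qR_nonneg (hp i)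
  have hF : ∀ i, Measurable (A.indicator fun z => ENNReal.ofReal |f i z|) := fun i => by
    have := hf i
    exact Measurable.indicator (by fun_prop) hA
  calc IfracE n m γ (fun i => A.indicator fun z => ENNReal.ofReal |f i z|) x
      ≤ ∫⁻ y, ∏ i, (A.indicator (fun z => ENNReal.ofReal |f i z|) (y i) *
          (edist x (y i) ^ (-a)) ^ qR (p i)) ∂pim n m := by
        refine lintegral_mono fun y => ?_
        rw [hγ, Finset.prod_mul_distrib, mul_comm]
        exact mul_le_mul_right (kernel_le_prod n m ha _ hq x y) _
    _ = ∏ i, ∫⁻ z, A.indicator (fun z => ENNReal.ofReal |f i z|) z *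
          (edist x z ^ (-a)) ^ qR (p i) :=
        lintegral_pi_prod volume m (fun i z => A.indicator (fun z => ENNReal.ofReal |f i z|) z *
          (edist x z ^ (-a)) ^ qR (p i)) fun i => (hF i).mul (hk.pow_const _)
    _ ≤ ∏ i, (wLpNorm n (f i) (v i) (p i) * endFactor n (p i) (v i) A *
          (∫⁻ y in A, (v i y)⁻¹ ^ conjR (p i) * edist x y ^ (-a)) ^ qR (p i)) :=
        Finset.prod_le_prod' fun i _ =>
          one_factor_holder n (hp i) (hv i).1 (hv i).2.1 (hf i) hA hk
    _ = _ := by rw [Finset.prod_mul_distrib, Finset.prod_mul_distrib]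

/-- Lemma 4.1: local boundedness of the multilinear fractional integral `I_{α̃,m}`
for `α̃ = α + δ`, applied to `f⃗ χ_{2B}`, under the `H_m(p⃗, α̃, δ̃)` condition. -/
theorem Ifrac_local_bound_sum
    (n m : ℕ) (hn : 1 ≤ n) (hm : 1 ≤ m) (α δ δt : ℝ)
    (hα : 0 < α) (hαmn : α < (m : ℝ) * n)
    (hδ : 0 < δ) (hδα : δ < (m : ℝ) * n - α) (hδt : δt ≤ δ)
    (p : Fin m → ℝ≥0∞) (hp : ∀ i, 1 ≤ p i)
    (hpn : ∑ i, (p i)⁻¹ < ENNReal.ofReal ((α + δ) / (n : ℝ)))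
    (β : Fin m → ℝ) (hβ : ∀ i, 0 < β i ∧ β i < n) (hβsum : ∑ i, β i = α + δ)
    (w : Rn n → ℝ≥0∞) (v : Fin m → Rn n → ℝ≥0∞)
    (hw : IsWeight n w) (hv : ∀ i, IsWeight n (v i))
    (hH : MemHm n m δ δt β p w v)
    (hRH : ∀ i, 1 < p i → MemRH n (m : ℝ) fun x => (v i x)⁻¹ ^ conjR (p i)) :
    ∃ C : ℝ≥0∞, C ≠ ∞ ∧ ∀ (c : Rn n) (R : ℝ), 0 < R →
      ∀ f : Fin m → Rn n → ℝ, (∀ i, Measurable (f i)) →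
        (∀ i, wLpNorm n (f i) (v i) (p i) ≠ ∞) →
        (∫⁻ x in ball c R,
            IfracE n m (α + δ)
              (fun i => (ball c (2 * R)).indicator fun z => ENNReal.ofReal |f i z|) x) ≤
          C * (volume (ball c R) ^ (1 + δt / (n : ℝ)) /
              essSup w (volume.restrict (ball c R))) *
            ∏ i, wLpNorm n (f i) (v i) (p i) := by
  have hn0 : (0 : ℝ) < n := by positivity
  have hm0 : (0 : ℝ) < m := by positivity
  set Q : ℝ := ∑ i, qR (p i) with hQ
  have hq : ∀ i, 0 ≤ qR (p i) := fun i => qR_nonneg (hp i)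
  have hinv : ∀ i, (p i)⁻¹ ≠ ∞ := fun i =>
    ENNReal.inv_ne_top.2 (zero_lt_one.trans_le (hp i)).ne'
  -- the condition `p > n / α̃` in terms of `Q = ∑ 1 / p_i'`
  have hQ1 : (m : ℝ) * n - (α + δ) < n * Q := by
    have h1 : ∑ i, ((p i)⁻¹).toReal < (α + δ) / n := by
      rw [← ENNReal.toReal_sum fun i _ => hinv i]
      exact ENNReal.toReal_lt_of_lt_ofReal hpn
    have h2 : Q = m - ∑ i, ((p i)⁻¹).toReal := by simp [hQ, qR, Finset.sum_sub_distrib]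
    rw [lt_div_iff₀ hn0] at h1
    rw [h2]
    nlinarith
  have hQ0 : 0 < Q := by
    have : 0 < n * Q := by linarith
    exact (pos_iff_pos_of_mul_pos this).1 hn0
  have hQm : Q ≤ m := by
    calc Q ≤ ∑ _i : Fin m, (1 : ℝ) := Finset.sum_le_sum fun i _ => qR_le_one (p i)
      _ = m := by simp
  -- the exponent for which `∏ i, |x - y_i|^{-a / p_i'}` has the homogeneity of the kernel
  set a : ℝ := ((m : ℝ) * n - (α + δ)) / Q with ha
  have haQ : a * Q = (m : ℝ) * n - (α + δ) := div_mul_cancel₀ _ hQ0.ne'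
  have ha0 : 0 ≤ a := div_nonneg (by linarith) hQ0.le
  have han : a < n := (div_lt_iff₀ hQ0).2 hQ1
  have hγ : α + δ - (m : ℝ) * n = -(a * Q) := by rw [haQ]; ring
  set e : Fin m → ℝ := fun i => (n : ℝ) - β i + δ / m with he
  have he0 : ∀ i, 0 ≤ e i := fun i => by
    have h1 := (hβ i).2
    have h2 : 0 ≤ δ / m := by positivity
    simp only [he]; linarith
  have hesum : ∑ i, e i = (m : ℝ) * n - (α + δ) + δ := by
    simp only [he, Finset.sum_add_distrib, Finset.sum_sub_distrib, hβsum]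
    simp
    field_simp
  obtain ⟨CH, hCH, hCHb⟩ := hH
  choose Cy hCy hCyb using fun i =>
    one_factor_young n m hn hm han (hp i) (hv i).1 (hRH i)
  set M : ℝ≥0∞ := 1 + 2 * volume (ball (0 : Rn n) 1) ^ (-(n : ℝ)⁻¹) with hM
  have hMt : M ≠ ∞ := by
    refine ENNReal.add_ne_top.2 ⟨ENNReal.one_ne_top, ENNReal.mul_ne_top (by simp) ?_⟩
    exact ENNReal.rpow_ne_top_of_ne_zero (volume_ball_ne_zero n 0 one_pos)
      measure_ball_lt_top.ne
  refine ⟨(∏ i, Cy i) * (∏ i, M ^ e i) * CH, ?_, fun c R hR f hf _ => ?_⟩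
  · exact ENNReal.mul_ne_top (ENNReal.mul_ne_top (ENNReal.prod_ne_top fun i _ => hCy i)
      (ENNReal.prod_ne_top fun i _ => ENNReal.rpow_ne_top_of_nonneg (he0 i) hMt)) hCH
  set T := volume (ball c R) with hT
  have hT0 : T ≠ 0 := volume_ball_ne_zero n c hR
  have hTt : T ≠ ∞ := measure_ball_lt_top.ne
  set W := essSup w (volume.restrict (ball c R)) with hW
  set A := ball c (2 * R) with hA
  set H : Fin m → Rn n → ℝ≥0∞ := fun i x =>
    ∫⁻ y in A, (v i y)⁻¹ ^ conjR (p i) * edist x y ^ (-a) with hHdef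
  have hHm : ∀ i, Measurable (H i) := fun i => by
    have hvm := (hv i).1
    have : Measurable (Function.uncurry fun x y : Rn n =>
        (v i y)⁻¹ ^ conjR (p i) * edist x y ^ (-a)) :=
      ((hvm.inv.pow_const _).comp measurable_snd).mul
        ((measurable_fst.edist measurable_snd).pow_const _)
    exact this.lintegral_prod_right'
  -- Hölder's inequality with exponents `m p_i'`; the remaining power falls on `|B|`
  have hHol : ∫⁻ x in ball c R, ∏ i, H i x ^ qR (p i) ≤
      T ^ (1 - Q / m) * ∏ i, ((∫⁻ x in ball c R, H i x ^ (m : ℝ)) ^ (m : ℝ)⁻¹) ^ qR (p i) := by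
    have h := ENNReal.lintegral_mul_prod_norm_pow_le (μ := volume.restrict (ball c R))
      (Finset.univ : Finset (Fin m)) (g := fun _ => 1) (f := fun i x => H i x ^ (m : ℝ))
      aemeasurable_const (fun i _ => ((hHm i).pow_const _).aemeasurable) (1 - Q / m)
      (p := fun i => (m : ℝ)⁻¹ * qR (p i))
      (by rw [← Finset.mul_sum, ← hQ]; ring)
      (by rw [sub_nonneg, div_le_one hm0]; exact hQm)
      (fun i _ => mul_nonneg (by positivity) (hq i))
    simp only [ENNReal.one_rpow, one_mul, lintegral_one, Measure.restrict_apply_univ] at h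
    simp only [ENNReal.rpow_mul, ← hT] at h
    refine le_trans (le_of_eq (lintegral_congr fun x => Finset.prod_congr rfl fun i _ => ?_)) h
    rw [← ENNReal.rpow_mul (H i x), mul_inv_cancel₀ hm0.ne', ENNReal.rpow_one]
  have hfac : ∀ i, endFactor n (p i) (v i) A *
      ((∫⁻ x in ball c R, H i x ^ (m : ℝ)) ^ (m : ℝ)⁻¹) ^ qR (p i) ≤
      Cy i * M ^ e i * T ^ (((m : ℝ)⁻¹ - a / n) * qR (p i) + (n : ℝ)⁻¹ * e i) *
        HmFactor n m δ β p v c R i := by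
    intro i
    refine (hCyb i c R hR).trans ?_
    have hd := dualNorm_le_HmFactor n m δ β p v i (hp i) (hv i).1 (he0 i) c hR
    have hrad : T ^ (n : ℝ)⁻¹ + ENNReal.ofReal (2 * R) = M * T ^ (n : ℝ)⁻¹ := by
      rw [ENNReal.ofReal_mul (by norm_num), ofReal_radius n hn c hR, hM, ENNReal.ofReal_ofNat]
      ring
    rw [← hT, hrad, ENNReal.mul_rpow_of_nonneg _ _ (he0 i), ← ENNReal.rpow_mul] at hd
    refine (mul_le_mul_right hd _).trans (le_of_eq ?_)
    rw [ENNReal.rpow_add _ _ hT0 hTt]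
    ring
  have hprodH : ∏ i, HmFactor n m δ β p v c R i ≤ CH * T ^ ((δt - δ) / (n : ℝ)) / W := by
    have hw0 : W ≠ 0 := by
      intro h0
      have hz := ENNReal.essSup_eq_zero_iff.1 h0
      have hp0 : ∀ᵐ x ∂(volume.restrict (ball c R)), False := by
        filter_upwards [hz, ae_restrict_of_ae hw.2.1] with x h1 h2
        exact h2.1.ne' h1
      rw [Filter.eventually_false_iff_eq_bot, ae_eq_bot, Measure.restrict_eq_zero] at hp0
      exact hT0 hp0
    have hp0 : T ^ ((δt - δ) / (n : ℝ)) ≠ 0 := (ENNReal.rpow_pos hT0.bot_lt hTt).ne'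
    have hpt : T ^ ((δt - δ) / (n : ℝ)) ≠ ∞ := ENNReal.rpow_ne_top_of_ne_zero hT0 hTt
    rw [ENNReal.le_div_iff_mul_le (Or.inl hw0) (Or.inr (ENNReal.mul_ne_top hCH hpt))]
    have h := hCHb c R hR
    rw [HmLHS, ← hT, ← hW, div_eq_mul_inv, mul_assoc, mul_comm, mul_assoc, mul_comm,
      ← div_eq_mul_inv, ENNReal.div_le_iff hp0 hpt] at h
    exact h
  have hexp : (1 - Q / m) + (∑ i, (((m : ℝ)⁻¹ - a / n) * qR (p i) + (n : ℝ)⁻¹ * e i)) +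
      (δt - δ) / (n : ℝ) = 1 + δt / n := by
    rw [Finset.sum_add_distrib, ← Finset.mul_sum, ← Finset.mul_sum, ← hQ, hesum]
    have : a / n * Q = (a * Q) / n := by ring
    rw [sub_mul, this, haQ]
    field_simp
    ring
  calc ∫⁻ x in ball c R, IfracE n m (α + δ)
        (fun i => A.indicator fun z => ENNReal.ofReal |f i z|) x
      ≤ ∫⁻ x in ball c R, (∏ i, wLpNorm n (f i) (v i) (p i)) *
          (∏ i, endFactor n (p i) (v i) A) * ∏ i, H i x ^ qR (p i) :=
        lintegral_mono fun x => IfracE_le n m ha0 hp hγ hv hf measurableSet_ball x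
    _ = (∏ i, wLpNorm n (f i) (v i) (p i)) * (∏ i, endFactor n (p i) (v i) A) *
          ∫⁻ x in ball c R, ∏ i, H i x ^ qR (p i) :=
        lintegral_const_mul _ (Finset.measurable_prod _ fun i _ => (hHm i).pow_const _)
    _ ≤ (∏ i, wLpNorm n (f i) (v i) (p i)) * (∏ i, endFactor n (p i) (v i) A) *
          (T ^ (1 - Q / m) *
            ∏ i, ((∫⁻ x in ball c R, H i x ^ (m : ℝ)) ^ (m : ℝ)⁻¹) ^ qR (p i)) :=
        mul_le_mul_right hHol _
    _ = (∏ i, wLpNorm n (f i) (v i) (p i)) * T ^ (1 - Q / m) *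
          ∏ i, (endFactor n (p i) (v i) A *
            ((∫⁻ x in ball c R, H i x ^ (m : ℝ)) ^ (m : ℝ)⁻¹) ^ qR (p i)) := by
        rw [Finset.prod_mul_distrib]; ring
    _ ≤ (∏ i, wLpNorm n (f i) (v i) (p i)) * T ^ (1 - Q / m) *
          ∏ i, (Cy i * M ^ e i * T ^ (((m : ℝ)⁻¹ - a / n) * qR (p i) + (n : ℝ)⁻¹ * e i) *
            HmFactor n m δ β p v c R i) :=
        mul_le_mul_right (Finset.prod_le_prod' fun i _ => hfac i) _
    _ ≤ (∏ i, wLpNorm n (f i) (v i) (p i)) * T ^ (1 - Q / m) *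
          ((∏ i, Cy i) * (∏ i, M ^ e i) *
            T ^ (∑ i, (((m : ℝ)⁻¹ - a / n) * qR (p i) + (n : ℝ)⁻¹ * e i)) *
            (CH * T ^ ((δt - δ) / (n : ℝ)) / W)) := by
        rw [Finset.prod_mul_distrib, Finset.prod_mul_distrib, Finset.prod_mul_distrib,
          ENNReal_prod_rpow_sum T hT0 hTt]
        exact mul_le_mul_right (mul_le_mul_right hprodH _) _
    _ = _ := by
        rw [← hexp, ENNReal.rpow_add _ _ hT0 hTt, ENNReal.rpow_add _ _ hT0 hTt]
        simp only [div_eq_mul_inv]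
        ring
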